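/- For every integer n ≥ 1, the integral group cohomology H^n(F; ℤ) of Thompson's group F (with trivial ℤ coefficients) is free abelian of rank 2, i.e., isomorphic to ℤ × ℤ. -/

import Mathlib

/-- The defining relations of Thompson's group `F`. -/
def thompsonRels : Set (FreeGroup ℕ) :=
  {r | ∃ i n : ℕ, i < n ∧
    r = (FreeGroup.of i)⁻¹ * FreeGroup.of n * FreeGroup.of i * (FreeGroup.of (n + 1))⁻¹}

/-- Thompson's group `F`, defined by its infinite presentation. -/
abbrev ThompsonF : Type := PresentedGroup thompsonRels

/-! `F` acts freely on the cubical complex of Brown and Geoghegan: its `k`-cubes are the pairs of a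
vertex `g ∈ F` and indices `i₁ < ⋯ < iₖ`, and the edges of such a cube at `g` lead to the vertices
`g * xᵢ`, where `i` is one of these indices. Finitely many elements of `F` have a common right
multiple by positive elements, so a chain only involves cubes all of whose vertices divide some `h`.
The admissible indices at a vertex `g` are then those of the generators dividing `g⁻¹ * h`, and any
finite set of them spans an admissible cube. Hence the lower faces at `g` are those of a full
simplex, contracted by the cone on its least index, whereas the upper faces lie at vertices with a
shorter quotient. Induction on the length of `g⁻¹ * h` shows that the complex is acyclic.

The cohomology of `F` is thus computed by cochains with one value per set of indices. On these,
sending `f` to `T ↦ f ({1} ∪ (T + 2)) - f ({0} ∪ (T + 2))` commutes with the coboundary up to sign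
and is a homotopy equivalence in positive degrees, so that `Hᵏ⁺¹ ≅ Hᵏ` for `0 < k`, while a class in
`H¹` is freely determined by its values on `x₀` and `x₁`.
-/

namespace ThompsonF

/-- The generator `xᵢ` of Thompson's group. -/
def gen (i : ℕ) : ThompsonF := PresentedGroup.of i

theorem gen_mul_gen {i n : ℕ} (h : i < n) : gen n * gen i = gen i * gen (n + 1) := by
  have hrel := PresentedGroup.one_of_mem (rels := thompsonRels) ⟨i, n, h, rfl⟩
  simp only [map_mul, map_inv] at hrel
  rwa [mul_inv_eq_one, mul_assoc, inv_mul_eq_iff_eq_mul] at hrel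

theorem gen_inv_mul_gen {i n : ℕ} (h : i < n) : (gen i)⁻¹ * gen n = gen (n + 1) * (gen i)⁻¹ := by
  rw [inv_mul_eq_iff_eq_mul, ← mul_assoc, ← gen_mul_gen h, mul_inv_cancel_right]

theorem gen_inv_mul_gen' {i n : ℕ} (h : i < n) : (gen n)⁻¹ * gen i = gen i * (gen (n + 1))⁻¹ := by
  rw [inv_mul_eq_iff_eq_mul, ← mul_assoc, gen_mul_gen h, mul_inv_cancel_right]

/-! ### The positive monoid -/

/-- The positive monoid of Thompson's group: products of the generators, without inverses. -/
def positive : Submonoid ThompsonF := Submonoid.closure (Set.range gen)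

theorem gen_mem_positive (i : ℕ) : gen i ∈ positive := Submonoid.subset_closure ⟨i, rfl⟩

@[elab_as_elim]
theorem positive_induction {P : (m : ThompsonF) → m ∈ positive → Prop} (one : P 1 (one_mem _))
    (gen_mul : ∀ i u (hu : u ∈ positive), P u hu →
      P (gen i * u) (mul_mem (gen_mem_positive i) hu)) {m : ThompsonF} (hm : m ∈ positive) :
    P m hm := by
  refine Submonoid.closure_induction_left (motive := P) one ?_ hm
  rintro _ ⟨i, rfl⟩ u hu
  exact gen_mul i u hu

theorem exists_gen_inv_mul_mul_mem_positive (i : ℕ) {u : ThompsonF} (hu : u ∈ positive) :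
    ∃ m ∈ positive, (gen i)⁻¹ * u * m ∈ positive := by
  induction hu using positive_induction generalizing i with
  | one => exact ⟨gen i, gen_mem_positive i, by simp⟩
  | gen_mul a u hu ih =>
    rcases lt_trichotomy i a with h | rfl | h
    · obtain ⟨m, hm, hum⟩ := ih i
      refine ⟨m, hm, ?_⟩
      rw [← mul_assoc, gen_inv_mul_gen h, mul_assoc, mul_assoc, ← mul_assoc _ u]
      exact mul_mem (gen_mem_positive _) hum
    · exact ⟨1, one_mem _, by simpa using hu⟩
    · obtain ⟨m, hm, hum⟩ := ih (i + 1)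
      refine ⟨m, hm, ?_⟩
      rw [← mul_assoc, gen_inv_mul_gen' h, mul_assoc, mul_assoc, ← mul_assoc _ u]
      exact mul_mem (gen_mem_positive _) hum

theorem exists_mul_mem_positive (u : ThompsonF) : ∃ m ∈ positive, u * m ∈ positive := by
  have hu : u ∈ Subgroup.closure (Set.range gen) := by
    rw [show Set.range gen = Set.range (PresentedGroup.of (rels := thompsonRels)) from rfl,
      PresentedGroup.closure_range_of]
    trivial
  induction hu using Subgroup.closure_induction_left with
  | one => exact ⟨1, one_mem _, by simp⟩
  | mul_left x hx y _ ih =>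
    obtain ⟨i, rfl⟩ := hx
    obtain ⟨m, hm, hym⟩ := ih
    exact ⟨m, hm, by rw [mul_assoc]; exact mul_mem (gen_mem_positive i) hym⟩
  | inv_mul_cancel x hx y _ ih =>
    obtain ⟨i, rfl⟩ := hx
    obtain ⟨m, hm, hym⟩ := ih
    obtain ⟨m', hm', hym'⟩ := exists_gen_inv_mul_mul_mem_positive i hym
    exact ⟨m * m', mul_mem hm hm', by simpa only [mul_assoc] using hym'⟩

theorem exists_forall_mul_mem_positive (s : Finset ThompsonF) :
    ∃ m, ∀ u ∈ s, u * m ∈ positive := by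
  classical
  induction s using Finset.induction_on with
  | empty => exact ⟨1, by simp⟩
  | insert u s _ ih =>
    obtain ⟨m, hs⟩ := ih
    obtain ⟨n, hn, hu⟩ := exists_mul_mem_positive (u * m)
    refine ⟨m * n, fun v hv ↦ ?_⟩
    rw [← mul_assoc]
    rcases Finset.mem_insert.1 hv with rfl | hv
    · exact hu
    · exact mul_mem (hs v hv) hn

/-- The exponent sum of a word in the generators; on the positive monoid it is the word length. -/
def exponentSum : ThompsonF →* Multiplicative ℤ :=
  PresentedGroup.toGroup (f := fun _ ↦ Multiplicative.ofAdd 1) <| by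
    rintro _ ⟨i, n, -, rfl⟩
    simp

@[simp] theorem exponentSum_gen (i : ℕ) : exponentSum (gen i) = Multiplicative.ofAdd 1 :=
  PresentedGroup.toGroup.of _

theorem toAdd_exponentSum_gen_inv_mul (i : ℕ) (m : ThompsonF) :
    (exponentSum ((gen i)⁻¹ * m)).toAdd = (exponentSum m).toAdd - 1 := by
  simp only [map_mul, map_inv, exponentSum_gen, toAdd_mul, toAdd_inv, toAdd_ofAdd]
  ring

theorem exponentSum_nonneg {m : ThompsonF} (hm : m ∈ positive) :
    0 ≤ (exponentSum m).toAdd := by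
  induction hm using positive_induction with
  | one => simp
  | gen_mul i u _ ih => simp only [map_mul, exponentSum_gen, toAdd_mul, toAdd_ofAdd]; omega

/-! ### Divisors of positive elements -/

/-- The indices of the generators dividing `m` on the left in the positive monoid. -/
def divisors (m : ThompsonF) : Set ℕ := {i | (gen i)⁻¹ * m ∈ positive}

theorem mem_divisors {m : ThompsonF} {i : ℕ} : i ∈ divisors m ↔ (gen i)⁻¹ * m ∈ positive :=
  Iff.rfl

theorem mem_positive_of_mem_divisors {m : ThompsonF} {i : ℕ} (h : i ∈ divisors m) :
    m ∈ positive := by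
  simpa using mul_mem (gen_mem_positive i) (mem_divisors.1 h)

theorem eq_one_of_divisors_eq_empty {m : ThompsonF} (hm : m ∈ positive) (h : divisors m = ∅) :
    m = 1 := by
  induction hm using positive_induction with
  | one => rfl
  | gen_mul i u hu _ =>
    have hi : i ∈ divisors (gen i * u) := by rwa [mem_divisors, inv_mul_cancel_left]
    exact absurd hi (by simp [h])

theorem exponentSum_pos {m : ThompsonF} {i : ℕ} (h : i ∈ divisors m) :
    0 < (exponentSum m).toAdd := by
  have := exponentSum_nonneg (mem_divisors.1 h)
  rw [toAdd_exponentSum_gen_inv_mul] at this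
  omega

/-- The piecewise linear homeomorphism stretching `[i, i + 1]` by a factor of two onto
`[i, i + 2]` and translating everything to the right of it. -/
def stretch (i : ℕ) : Equiv.Perm ℚ where
  toFun t := if t ≤ i then t else if t ≤ i + 1 then 2 * t - i else t + 1
  invFun t := if t ≤ i then t else if t ≤ i + 2 then (t + i) / 2 else t - 1
  left_inv t := by
    dsimp only
    split_ifs <;> linarith
  right_inv t := by
    dsimp only
    split_ifs <;> linarith

theorem stretch_mul_stretch {i n : ℕ} (h : i < n) :
    stretch i * stretch n = stretch (n + 1) * stretch i := by
  have hin : (i : ℚ) + 1 ≤ n := by exact_mod_cast h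
  ext t
  simp only [Equiv.Perm.mul_apply, stretch, Equiv.coe_fn_mk, Nat.cast_add, Nat.cast_one]
  split_ifs <;> linarith

theorem stretch_natCast_of_le {i k : ℕ} (h : k ≤ i) : stretch i k = k := by
  simp [stretch, h]

theorem stretch_natCast_of_lt {i k : ℕ} (h : i < k) : stretch i k = (k + 1 : ℕ) := by
  have hik : (i : ℚ) + 1 ≤ k := by exact_mod_cast h
  simp only [stretch, Equiv.coe_fn_mk, Nat.cast_add, Nat.cast_one]
  split_ifs <;> linarith

/-- The piecewise linear action of Thompson's group on the line, in which `xᵢ` is the inverse of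
`stretch i`. -/
def plAction : ThompsonF →* Equiv.Perm ℚ :=
  PresentedGroup.toGroup (f := fun i ↦ (stretch i)⁻¹) <| by
    rintro _ ⟨i, n, h, rfl⟩
    have hcomm : stretch i * (stretch n)⁻¹ = (stretch (n + 1))⁻¹ * stretch i := by
      rw [mul_inv_eq_iff_eq_mul, mul_assoc, stretch_mul_stretch h, inv_mul_cancel_left]
    simp only [map_mul, map_inv, FreeGroup.lift_apply_of, inv_inv]
    rw [hcomm, mul_inv_cancel_right, inv_mul_cancel]

/-- The position of the integer `k` after stretching according to `m`. For positive `m` the gaps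
between consecutive knots record which generators divide `m`. -/
def knot (m : ThompsonF) (k : ℕ) : ℚ := plAction m⁻¹ k

theorem knot_one (k : ℕ) : knot 1 k = k := by simp [knot]

theorem knot_gen_mul (i : ℕ) (m : ThompsonF) (k : ℕ) :
    knot (gen i * m) k = if k ≤ i then knot m k else knot m (k + 1) := by
  have hgen : plAction (gen i) = (stretch i)⁻¹ := PresentedGroup.toGroup.of _
  have hstretch : knot (gen i * m) k = plAction m⁻¹ (stretch i k) := by
    simp [knot, hgen]
  rw [hstretch]
  split_ifs with h
  · rw [stretch_natCast_of_le h, knot]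
  · rw [stretch_natCast_of_lt (not_le.1 h), knot]

theorem knot_add_one_le {m : ThompsonF} (hm : m ∈ positive) (k : ℕ) :
    knot m k + 1 ≤ knot m (k + 1) := by
  induction hm using positive_induction generalizing k with
  | one => simp [knot_one]
  | gen_mul i u _ ih =>
    simp only [knot_gen_mul]
    split_ifs
    · exact ih k
    · linarith [ih k, ih (k + 1)]
    · omega
    · exact ih (k + 1)

theorem mem_divisors_iff_knot {m : ThompsonF} (hm : m ∈ positive) {i : ℕ} :
    i ∈ divisors m ↔ knot m i + 1 < knot m (i + 1) := by
  constructor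
  · intro hi
    rw [mem_divisors] at hi
    rw [← mul_inv_cancel_left (gen i) m, knot_gen_mul, knot_gen_mul, if_pos le_rfl,
      if_neg (by omega)]
    linarith [knot_add_one_le hi i, knot_add_one_le hi (i + 1)]
  · intro h
    induction hm using positive_induction generalizing i with
    | one => simp [knot_one] at h
    | gen_mul a u hu ih =>
      rw [knot_gen_mul, knot_gen_mul] at h
      rw [mem_divisors, ← mul_assoc]
      rcases lt_trichotomy i a with hia | rfl | hai
      · rw [gen_inv_mul_gen hia, mul_assoc]
        rw [if_pos hia.le, if_pos (Nat.succ_le_of_lt hia)] at h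
        exact mul_mem (gen_mem_positive _) (ih h)
      · rwa [inv_mul_cancel, one_mul]
      · rw [gen_inv_mul_gen' hai, mul_assoc]
        rw [if_neg hai.not_ge, if_neg (by omega)] at h
        exact mul_mem (gen_mem_positive _) (ih h)

theorem succ_mem_divisors_gen_inv_mul {m : ThompsonF} {i n : ℕ} (hin : i < n)
    (hi : i ∈ divisors m) (hn : n ∈ divisors m) : n + 1 ∈ divisors ((gen i)⁻¹ * m) := by
  rw [mem_divisors_iff_knot (mem_divisors.1 hi)]
  rw [mem_divisors_iff_knot (mem_positive_of_mem_divisors hn), ← mul_inv_cancel_left (gen i) m,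
    knot_gen_mul, knot_gen_mul, if_neg hin.not_ge, if_neg (by omega)] at hn
  exact hn

theorem mem_divisors_gen_inv_mul {m : ThompsonF} {i n : ℕ} (hin : i < n)
    (hi : i ∈ divisors m) (hn : n ∈ divisors m) : i ∈ divisors ((gen n)⁻¹ * m) := by
  have hcomm : (gen i)⁻¹ * ((gen n)⁻¹ * m) = (gen (n + 1))⁻¹ * ((gen i)⁻¹ * m) := by
    rw [← mul_assoc, ← mul_assoc, ← mul_inv_rev, ← mul_inv_rev, gen_mul_gen hin]
  rw [mem_divisors, hcomm]
  exact succ_mem_divisors_gen_inv_mul hin hi hn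

/-! ### Cubical cells and their boundary -/

/-- A `k`-dimensional cell, i.e. a set `i₁ < ⋯ < iₖ` of natural numbers, encoded by its gaps
`i₁, i₂ - i₁ - 1, …, iₖ - iₖ₋₁ - 1`. -/
inductive Cell : ℕ → Type
  | nil : Cell 0
  | cons {k : ℕ} (a : ℕ) (T : Cell k) : Cell (k + 1)

namespace Cell

/-- The translate `i₁ + j < ⋯ < iₖ + j` of a cell. -/
def raise (j : ℕ) : {k : ℕ} → Cell k → Cell k
  | _, nil => nil
  | _, cons a T => cons (a + j) T

theorem raise_cons {k : ℕ} (a j : ℕ) (T : Cell k) : (cons a T).raise j = cons (a + j) T := rfl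

@[simp] theorem raise_zero {k : ℕ} (S : Cell k) : S.raise 0 = S := by cases S <;> rfl

@[simp] theorem raise_raise {k : ℕ} (S : Cell k) (i j : ℕ) :
    (S.raise i).raise j = S.raise (i + j) := by
  cases S with
  | nil => rfl
  | cons a T => simp only [raise, Nat.add_assoc]

/-- The set `{i₁, …, iₖ}` encoded by a cell. -/
def indices : {k : ℕ} → Cell k → Finset ℕ
  | _, nil => ∅
  | _, cons a T => insert a (T.indices.map (addRightEmbedding (a + 1)))

theorem mem_indices_cons {k a j : ℕ} {T : Cell k} :
    j ∈ (cons a T).indices ↔ j = a ∨ ∃ i ∈ T.indices, i + (a + 1) = j := by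
  simp [indices]

theorem mem_indices_raise {k j n : ℕ} {S : Cell k} :
    n ∈ (S.raise j).indices ↔ ∃ i ∈ S.indices, i + j = n := by
  cases S with
  | nil => simp [raise, indices]
  | cons a T =>
    simp only [raise, mem_indices_cons]
    constructor
    · rintro (rfl | ⟨i, hi, rfl⟩)
      · exact ⟨a, .inl rfl, rfl⟩
      · exact ⟨i + (a + 1), .inr ⟨i, hi, rfl⟩, by omega⟩
    · rintro ⟨_, rfl | ⟨i, hi, rfl⟩, rfl⟩
      · exact .inl rfl
      · exact .inr ⟨i, hi, by omega⟩

end Cell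

section Boundary

variable {R M N : Type*} [CommRing R] [AddCommGroup M] [Module R M] [AddCommGroup N] [Module R N]

/-- The cubical boundary with coefficients in a module `M` on which the generators `xᵢ` act by
`φ i`. For each index `i` of a cell, the lower face omits `i`, while the upper face omits `i`,
raises the larger indices by one and applies `φ i` to the coefficient. -/
noncomputable def boundary : (ℕ → Module.End R M) → (k : ℕ) →
    (Cell (k + 1) →₀ M) →ₗ[R] (Cell k →₀ M)
  | φ, 0 => Finsupp.lsum R fun
    | .cons a _ => Finsupp.lsingle .nil ∘ₗ (1 - φ a)
  | φ, k + 1 => Finsupp.lsum R fun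
    | .cons a T => Finsupp.lsingle (T.raise (a + 1)) - Finsupp.lsingle (T.raise (a + 2)) ∘ₗ φ a -
        Finsupp.lmapDomain M R (.cons a) ∘ₗ
          boundary (fun n ↦ φ (n + (a + 1))) k ∘ₗ Finsupp.lsingle T

variable (φ : ℕ → Module.End R M)

theorem boundary_zero_single (a : ℕ) (T : Cell 0) (m : M) :
    boundary φ 0 (.single (.cons a T) m) = .single .nil (m - φ a m) := by
  simp [boundary]

theorem boundary_succ_single {k : ℕ} (a : ℕ) (T : Cell (k + 1)) (m : M) :
    boundary φ (k + 1) (.single (.cons a T) m) =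
      .single (T.raise (a + 1)) m - .single (T.raise (a + 2)) (φ a m) -
        (boundary (fun n ↦ φ (n + (a + 1))) k (.single T m)).mapDomain (.cons a) := by
  simp [boundary]

theorem boundary_mapDomain_cons {k : ℕ} (a : ℕ) (z : Cell (k + 1) →₀ M) :
    boundary φ (k + 1) (z.mapDomain (.cons a)) =
      z.mapDomain (.raise (a + 1)) -
        (Finsupp.mapRange.linearMap (φ a) z).mapDomain (.raise (a + 2)) -
        (boundary (fun n ↦ φ (n + (a + 1))) k z).mapDomain (.cons a) := by
  induction z using Finsupp.induction_linear with
  | zero => simp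
  | add z w hz hw =>
    simp only [Finsupp.mapDomain_add, map_add, hz, hw]
    abel
  | single T m => simp [boundary_succ_single, Finsupp.mapDomain_single]

theorem boundary_mapDomain_raise {k : ℕ} (j : ℕ) (z : Cell (k + 1) →₀ M) :
    boundary φ k (z.mapDomain (.raise j)) =
      (boundary (fun n ↦ φ (n + j)) k z).mapDomain (.raise j) := by
  induction z using Finsupp.induction_linear with
  | zero => simp
  | add z w hz hw => simp only [Finsupp.mapDomain_add, map_add, hz, hw]
  | single S m =>
    cases S with | cons a T =>
    cases k with
    | zero => simp only [Finsupp.mapDomain_single, Cell.raise, boundary_zero_single]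
    | succ k =>
      have hcons (w : Cell k →₀ M) : w.mapDomain (Cell.cons (a + j)) =
          (w.mapDomain (Cell.cons a)).mapDomain (.raise j) := by
        rw [← Finsupp.mapDomain_comp]
        rfl
      simp only [Finsupp.mapDomain_single, Finsupp.mapDomain_sub, Cell.raise_cons,
        boundary_succ_single, Cell.raise_raise, hcons, Nat.add_right_comm a j,
        Nat.add_assoc _ (a + 1) j]

theorem mapRange_single (ψ : M →ₗ[R] N) {k : ℕ} (S : Cell k) (m : M) :
    Finsupp.mapRange.linearMap ψ (.single S m) = .single S (ψ m) := by
  simp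

theorem mapRange_mapDomain (ψ : M →ₗ[R] N) {k l : ℕ} (f : Cell k → Cell l) (z : Cell k →₀ M) :
    Finsupp.mapRange.linearMap ψ (z.mapDomain f) =
      (Finsupp.mapRange.linearMap ψ z).mapDomain f := by
  simp [Finsupp.mapDomain_mapRange]

theorem boundary_mapRange {ψ : M →ₗ[R] N} {φ : ℕ → Module.End R M} {φ' : ℕ → Module.End R N}
    (h : ∀ n, ψ ∘ₗ φ n = φ' n ∘ₗ ψ) {k : ℕ} (z : Cell (k + 1) →₀ M) :
    boundary φ' k (Finsupp.mapRange.linearMap ψ z) =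
      Finsupp.mapRange.linearMap ψ (boundary φ k z) := by
  induction z using Finsupp.induction_linear with
  | zero => simp only [map_zero]
  | add z w hz hw => simp only [map_add, hz, hw]
  | single S m =>
    have happ (n : ℕ) : ψ (φ n m) = φ' n (ψ m) := LinearMap.congr_fun (h n) m
    induction k generalizing φ φ' with
    | zero =>
      cases S with | cons a T =>
      simp only [mapRange_single, boundary_zero_single, map_sub, happ]
    | succ k ih =>
      cases S with | cons a T =>
      simp only [mapRange_single, boundary_succ_single, map_sub, mapRange_mapDomain, happ,
        ← ih (φ := fun n ↦ φ (n + (a + 1))) (φ' := fun n ↦ φ' (n + (a + 1))) (fun _ ↦ h _) T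
          (fun _ ↦ happ _)]

theorem boundary_boundary {φ : ℕ → Module.End R M} (h : ∀ i n, i < n → φ i * φ n = φ (n + 1) * φ i)
    {k : ℕ} (z : Cell (k + 2) →₀ M) : boundary φ k (boundary φ (k + 1) z) = 0 := by
  induction z using Finsupp.induction_linear with
  | zero => simp only [map_zero]
  | add z w hz hw => rw [map_add, map_add, hz, hw, add_zero]
  | single S m =>
    induction k generalizing φ m with
    | zero =>
      rcases S with _ | ⟨a, _ | ⟨b, T⟩⟩
      have hab : φ a (φ (b + (a + 1)) m) = φ (b + (a + 2)) (φ a m) :=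
        LinearMap.congr_fun (h a (b + (a + 1)) (by omega)) m
      simp only [boundary_succ_single, boundary_zero_single, Cell.raise, map_sub,
        Finsupp.mapDomain_sub, Finsupp.mapDomain_single, hab, Finsupp.single_sub]
      abel
    | succ k ih =>
      cases S with | cons a T =>
      have hraise (j : ℕ) (m : M) : boundary φ (k + 1) (.single (T.raise j) m) =
          (boundary (fun n ↦ φ (n + j)) (k + 1) (.single T m)).mapDomain (.raise j) := by
        rw [← Finsupp.mapDomain_single, boundary_mapDomain_raise]
      have hshift : boundary (fun n ↦ φ (n + (a + 2))) (k + 1) (.single T (φ a m)) =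
          Finsupp.mapRange.linearMap (φ a)
            (boundary (fun n ↦ φ (n + (a + 1))) (k + 1) (.single T m)) := by
        rw [← mapRange_single, boundary_mapRange (φ := fun n ↦ φ (n + (a + 1)))]
        exact fun n ↦ h _ _ (by omega)
      rw [boundary_succ_single, map_sub, map_sub, hraise, hraise, hshift, boundary_mapDomain_cons,
        ih, Finsupp.mapDomain_zero, sub_zero, sub_self]
      intro i n hin
      rw [h _ _ (by omega), Nat.add_right_comm]

end Boundary

/-! ### Simplicial cones -/

section Cone

variable {R M N : Type*} [CommRing R] [AddCommGroup M] [Module R M] [AddCommGroup N] [Module R N]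

variable (R) in
/-- The simplicial boundary, consisting of the lower faces of the cubical boundary. -/
noncomputable def simplicialBoundary (k : ℕ) : (Cell (k + 1) →₀ M) →ₗ[R] (Cell k →₀ M) :=
  boundary 0 k

theorem simplicialBoundary_zero_single (S : Cell 1) (m : M) :
    simplicialBoundary R 0 (.single S m) = .single .nil m := by
  rcases S with _ | ⟨a, T⟩
  simp [simplicialBoundary, boundary_zero_single]

theorem simplicialBoundary_succ_single {k : ℕ} (a : ℕ) (T : Cell (k + 1)) (m : M) :
    simplicialBoundary R (k + 1) (.single (.cons a T) m) =
      .single (T.raise (a + 1)) m -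
        (simplicialBoundary R k (.single T m)).mapDomain (.cons a) := by
  rw [simplicialBoundary, boundary_succ_single, Pi.zero_apply, LinearMap.zero_apply,
    Finsupp.single_zero, sub_zero]
  rfl

theorem simplicialBoundary_single_raise {k : ℕ} (j : ℕ) (T : Cell (k + 1)) (m : M) :
    simplicialBoundary R k (.single (T.raise j) m) =
      (simplicialBoundary R k (.single T m)).mapDomain (.raise j) := by
  rw [← Finsupp.mapDomain_single, simplicialBoundary, boundary_mapDomain_raise]
  rfl

theorem simplicialBoundary_mapRange (ψ : M →ₗ[R] N) {k : ℕ} (z : Cell (k + 1) →₀ M) :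
    simplicialBoundary R k (Finsupp.mapRange.linearMap ψ z) =
      Finsupp.mapRange.linearMap ψ (simplicialBoundary R k z) :=
  boundary_mapRange (fun _ ↦ by simp) z

theorem simplicialBoundary_sub_boundary_mem {φ : ℕ → Module.End R M} {k : ℕ}
    {S : Cell (k + 1)} {m : M} {P : Submodule R (Cell k →₀ M)}
    (hP : ∀ i ∈ S.indices, ∀ T : Cell k,
      (∀ j ∈ T.indices, ∃ n ∈ S.indices, n < i ∧ j = n ∨ i < n ∧ j = n + 1) →
        .single T (φ i m) ∈ P) :
    simplicialBoundary R k (.single S m) - boundary φ k (.single S m) ∈ P := by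
  induction k generalizing φ with
  | zero =>
    cases S with | cons a T =>
    have hface : simplicialBoundary R 0 (.single (.cons a T) m) -
        boundary φ 0 (.single (.cons a T) m) = .single .nil (φ a m) := by
      rw [simplicialBoundary_zero_single, boundary_zero_single, ← Finsupp.single_sub,
        sub_sub_cancel]
    rw [hface]
    exact hP a (Cell.mem_indices_cons.2 (.inl rfl)) .nil (by simp [Cell.indices])
  | succ k ih =>
    cases S with | cons a T =>
    have hface : simplicialBoundary R (k + 1) (.single (.cons a T) m) -
        boundary φ (k + 1) (.single (.cons a T) m) = .single (T.raise (a + 2)) (φ a m) -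
          Finsupp.lmapDomain M R (.cons a) (simplicialBoundary R k (.single T m) -
            boundary (fun n ↦ φ (n + (a + 1))) k (.single T m)) := by
      rw [map_sub, Finsupp.lmapDomain_apply, Finsupp.lmapDomain_apply, boundary_succ_single,
        simplicialBoundary_succ_single]
      abel
    rw [hface]
    refine P.sub_mem (hP a (Cell.mem_indices_cons.2 (.inl rfl)) _ fun j hj ↦ ?_) ?_
    · obtain ⟨n, hn, rfl⟩ := Cell.mem_indices_raise.1 hj
      exact ⟨n + (a + 1), Cell.mem_indices_cons.2 (.inr ⟨n, hn, rfl⟩), .inr ⟨by omega, by omega⟩⟩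
    · refine ih (P := P.comap (Finsupp.lmapDomain M R (.cons a))) fun i hi T' hT' ↦ ?_
      rw [Submodule.mem_comap, Finsupp.lmapDomain_apply, Finsupp.mapDomain_single]
      refine hP _ (Cell.mem_indices_cons.2 (.inr ⟨i, hi, rfl⟩)) _ fun j hj ↦ ?_
      rcases Cell.mem_indices_cons.1 hj with rfl | ⟨l, hl, rfl⟩
      · exact ⟨j, Cell.mem_indices_cons.2 (.inl rfl), .inl ⟨by omega, rfl⟩⟩
      · obtain ⟨n, hn, hnl⟩ := hT' l hl
        exact ⟨n + (a + 1), Cell.mem_indices_cons.2 (.inr ⟨n, hn, rfl⟩), by omega⟩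

variable (R) in
/-- The simplicial cone with apex `a`: it adds the index `a` to a cell all of whose indices are
larger, and vanishes on a cell starting with `a`. -/
noncomputable def cone (a k : ℕ) : (Cell k →₀ M) →ₗ[R] (Cell (k + 1) →₀ M) :=
  Finsupp.lsum R fun
    | .nil => Finsupp.lsingle (.cons a .nil)
    | .cons b T => if a < b then Finsupp.lsingle (.cons a (.cons (b - (a + 1)) T)) else 0

theorem cone_single_cons (a k : ℕ) (T : Cell k) (m : M) :
    cone R a (k + 1) (.single (.cons a T) m) = 0 := by
  simp [cone]

theorem cone_single_raise (a k : ℕ) (T : Cell k) (m : M) :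
    cone R a k (.single (T.raise (a + 1)) m) = .single (.cons a T) m := by
  cases T with
  | nil => simp [cone, Cell.raise]
  | cons b T => simp [cone, Cell.raise, show a < b + (a + 1) by omega]

theorem cone_single_mem {a k : ℕ} {S : Cell k} {m : M} {P : Submodule R (Cell (k + 1) →₀ M)}
    (hP : ∀ T : Cell (k + 1), T.indices ⊆ insert a S.indices → .single T m ∈ P) :
    cone R a k (.single S m) ∈ P := by
  cases S with
  | nil =>
    simp only [cone, Finsupp.lsum_single, Finsupp.lsingle_apply]
    exact hP _ (by simp [Cell.indices])
  | cons b T =>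
    rcases lt_or_ge a b with hab | hba
    · have hb : Cell.cons b T = (Cell.cons (b - (a + 1)) T).raise (a + 1) := by
        rw [Cell.raise_cons, Nat.sub_add_cancel hab]
      rw [hb] at hP ⊢
      rw [cone_single_raise]
      refine hP _ fun j hj ↦ ?_
      rw [Finset.mem_insert, Cell.mem_indices_raise]
      exact Cell.mem_indices_cons.1 hj
    · simp [cone, hba.not_gt]

theorem cone_mapDomain_cons (a k : ℕ) (z : Cell k →₀ M) :
    cone R a (k + 1) (z.mapDomain (.cons a)) = 0 := by
  induction z using Finsupp.induction_linear with
  | zero => simp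
  | add z w hz hw => rw [Finsupp.mapDomain_add, map_add, hz, hw, add_zero]
  | single T m => rw [Finsupp.mapDomain_single, cone_single_cons]

theorem cone_mapDomain_raise (a k : ℕ) (z : Cell k →₀ M) :
    cone R a k (z.mapDomain (.raise (a + 1))) = z.mapDomain (.cons a) := by
  induction z using Finsupp.induction_linear with
  | zero => simp
  | add z w hz hw => rw [Finsupp.mapDomain_add, Finsupp.mapDomain_add, map_add, hz, hw]
  | single T m => rw [Finsupp.mapDomain_single, Finsupp.mapDomain_single, cone_single_raise]

theorem Cell.eq_cons_or_eq_raise {k a : ℕ} {S : Cell (k + 1)} (h : ∀ i ∈ S.indices, a ≤ i) :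
    (∃ T, S = .cons a T) ∨ ∃ T : Cell (k + 1), S = T.raise (a + 1) := by
  cases S with | cons b T =>
  have hab : a ≤ b := h b (Cell.mem_indices_cons.2 (.inl rfl))
  rcases hab.eq_or_lt with rfl | hlt
  · exact .inl ⟨T, rfl⟩
  · exact .inr ⟨.cons (b - (a + 1)) T, by rw [Cell.raise_cons, Nat.sub_add_cancel hlt]⟩

theorem simplicialBoundary_cone_zero (a : ℕ) (S : Cell 0) (m : M) :
    simplicialBoundary R 0 (cone R a 0 (.single S m)) = .single S m := by
  cases S
  simp [cone, simplicialBoundary_zero_single]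

theorem simplicialBoundary_cone_succ {a k : ℕ} {S : Cell (k + 1)} (h : ∀ i ∈ S.indices, a ≤ i)
    (m : M) :
    simplicialBoundary R (k + 1) (cone R a (k + 1) (.single S m)) +
      cone R a k (simplicialBoundary R k (.single S m)) = .single S m := by
  rcases Cell.eq_cons_or_eq_raise h with ⟨T, rfl⟩ | ⟨T, rfl⟩
  · rw [cone_single_cons, map_zero, zero_add]
    cases k with
    | zero =>
      cases T
      simp [simplicialBoundary_zero_single, cone]
    | succ k =>
      rw [simplicialBoundary_succ_single, map_sub, cone_mapDomain_cons, cone_single_raise, sub_zero]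
  · rw [cone_single_raise, simplicialBoundary_succ_single, simplicialBoundary_single_raise,
      cone_mapDomain_raise, sub_add_cancel]

end Cone

/-! ### Acyclicity of the cubical complex -/

section Acyclic

variable (R : Type*) [CommRing R]

open MonoidAlgebra

/-- Right multiplication by the generator `xₙ` on the group ring. -/
noncomputable def mulGen (n : ℕ) : Module.End R R[ThompsonF] :=
  LinearMap.mulRight R (single (gen n) 1)

variable {R}

theorem mulGen_single (n : ℕ) (g : ThompsonF) (r : R) :
    mulGen R n (single g r) = single (g * gen n) r := by
  simp [mulGen, single_mul_single]

theorem mulGen_mul_mulGen {i n : ℕ} (h : i < n) :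
    mulGen R i * mulGen R n = mulGen R (n + 1) * mulGen R i := by
  ext g
  simp [mulGen_single, mul_assoc, gen_mul_gen h]

/-- The augmentation of the cubical complex, summing all coefficients of a `0`-chain. -/
noncomputable def augmentation : (Cell 0 →₀ R[ThompsonF]) →ₗ[R] R :=
  Finsupp.lsum R fun _ ↦ Finsupp.lsum R (fun _ ↦ LinearMap.id) ∘ₗ (coeffLinearEquiv R).toLinearMap

theorem augmentation_single (S : Cell 0) (g : ThompsonF) (r : R) :
    augmentation (.single S (single g r)) = r := by
  simp [augmentation]

theorem chain_induction {k : ℕ} {P : (Cell k →₀ R[ThompsonF]) → Prop} (zero : P 0)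
    (add : ∀ z w, P z → P w → P (z + w)) (single : ∀ S g r, P (.single S (.single g r)))
    (z : Cell k →₀ R[ThompsonF]) : P z := by
  induction z using Finsupp.induction_linear with
  | zero => exact zero
  | add z w hz hw => exact add z w hz hw
  | single S m =>
    induction m using MonoidAlgebra.induction_linear with
    | zero => simpa only [Finsupp.single_zero] using zero
    | add a b ha hb => simpa only [Finsupp.single_add] using add _ _ ha hb
    | single g r => exact single S g r

variable (R) in
/-- The chains spanned by the cubes `(g, S)` all of whose vertices divide `h`, i.e. such that
`g⁻¹ * h` is positive and divisible by all `xᵢ`, `i ∈ S`, where moreover `g⁻¹ * h` has length at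
most `N`. -/
noncomputable def chainsBelow (h : ThompsonF) (N k : ℕ) : Submodule R (Cell k →₀ R[ThompsonF]) :=
  .span R {z | ∃ S g r, z = .single S (single g r) ∧ g⁻¹ * h ∈ positive ∧
    ↑S.indices ⊆ divisors (g⁻¹ * h) ∧ (exponentSum (g⁻¹ * h)).toAdd ≤ N}

theorem single_mem_chainsBelow {h g : ThompsonF} {N k : ℕ} {S : Cell k}
    (hg : g⁻¹ * h ∈ positive) (hS : ↑S.indices ⊆ divisors (g⁻¹ * h))
    (hN : (exponentSum (g⁻¹ * h)).toAdd ≤ N) (r : R) :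
    .single S (single g r) ∈ chainsBelow R h N k :=
  Submodule.subset_span ⟨S, g, r, rfl, hg, hS, hN⟩

theorem chainsBelow_le {h m : ThompsonF} {N N' k : ℕ} (hm : m ∈ positive)
    (hN' : N + (exponentSum m).toAdd ≤ N') : chainsBelow R h N k ≤ chainsBelow R (h * m) N' k := by
  refine Submodule.span_le.2 ?_
  rintro _ ⟨S, g, r, rfl, hg, hS, hN⟩
  refine single_mem_chainsBelow ?_ (fun i hi ↦ ?_) ?_ r
  · rw [← mul_assoc]
    exact mul_mem hg hm
  · rw [mem_divisors, ← mul_assoc, ← mul_assoc, mul_assoc _ _ h]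
    exact mul_mem (hS hi) hm
  · rw [← mul_assoc, map_mul, toAdd_mul]
    omega

theorem chainsBelow_mono {h : ThompsonF} {N N' k : ℕ} (hN : N ≤ N') :
    chainsBelow R h N k ≤ chainsBelow R h N' k := by
  simpa using chainsBelow_le (R := R) (h := h) (k := k) (one_mem _) (by simpa using hN)

theorem map_mem_of_mem_chainsBelow {V : Type*} [AddCommGroup V] [Module R V] {h : ThompsonF}
    {N k : ℕ} {f : (Cell k →₀ R[ThompsonF]) →ₗ[R] V} {P : Submodule R V}
    (hf : ∀ S g r, g⁻¹ * h ∈ positive → ↑S.indices ⊆ divisors (g⁻¹ * h) →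
      (exponentSum (g⁻¹ * h)).toAdd ≤ N → f (.single S (single g r)) ∈ P)
    {z : Cell k →₀ R[ThompsonF]} (hz : z ∈ chainsBelow R h N k) : f z ∈ P := by
  have hle : chainsBelow R h N k ≤ P.comap f := by
    refine Submodule.span_le.2 ?_
    rintro _ ⟨S, g, r, rfl, hg, hS, hN⟩
    exact hf S g r hg hS hN
  exact hle hz

theorem simplicialBoundary_sub_boundary_mem_chainsBelow {h : ThompsonF} {N k : ℕ}
    {z : Cell (k + 1) →₀ R[ThompsonF]} (hz : z ∈ chainsBelow R h (N + 1) (k + 1)) :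
    simplicialBoundary R k z - boundary (mulGen R) k z ∈ chainsBelow R h N k := by
  refine map_mem_of_mem_chainsBelow (f := simplicialBoundary R k - boundary (mulGen R) k)
    (fun S g r _ hS hN ↦ ?_) hz
  refine simplicialBoundary_sub_boundary_mem fun i hi T hT ↦ ?_
  rw [mulGen_single]
  have hquot : (g * gen i)⁻¹ * h = (gen i)⁻¹ * (g⁻¹ * h) := by rw [mul_inv_rev, mul_assoc]
  refine single_mem_chainsBelow ?_ ?_ ?_ r <;> rw [hquot]
  · exact hS hi
  · intro j hj
    rcases hT j hj with ⟨n, hn, ⟨hni, rfl⟩ | ⟨hin, rfl⟩⟩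
    · exact mem_divisors_gen_inv_mul hni (hS hn) (hS hi)
    · exact succ_mem_divisors_gen_inv_mul hin (hS hi) (hS hn)
  · rw [toAdd_exponentSum_gen_inv_mul]
    push_cast at hN
    omega

open Classical in
variable (R) in
/-- The contracting homotopy of the simplicial boundary: at each vertex `g` properly dividing `h`
it is the cone whose apex is the least index of a generator dividing `g⁻¹ * h`. -/
noncomputable def contraction (h : ThompsonF) (k : ℕ) :
    (Cell k →₀ R[ThompsonF]) →ₗ[R] (Cell (k + 1) →₀ R[ThompsonF]) :=
  Finsupp.lsum R fun S ↦
    Finsupp.lsum R (fun g ↦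
      if divisors (g⁻¹ * h) = ∅ then 0
      else cone R (sInf (divisors (g⁻¹ * h))) k ∘ₗ Finsupp.lsingle S ∘ₗ lsingle g) ∘ₗ
    (coeffLinearEquiv R).toLinearMap

theorem contraction_single_of_eq_empty {h g : ThompsonF} (hD : divisors (g⁻¹ * h) = ∅) {k : ℕ}
    (S : Cell k) (r : R) : contraction R h k (.single S (single g r)) = 0 := by
  simp [contraction, hD]

theorem contraction_single_of_nonempty {h g : ThompsonF} (hD : (divisors (g⁻¹ * h)).Nonempty)
    {k : ℕ} (S : Cell k) (r : R) :
    contraction R h k (.single S (single g r)) =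
      cone R (sInf (divisors (g⁻¹ * h))) k (.single S (single g r)) := by
  simp [contraction, hD.ne_empty]

theorem contraction_simplicialBoundary_single {h g : ThompsonF}
    (hD : (divisors (g⁻¹ * h)).Nonempty) {k : ℕ} (S : Cell (k + 1)) (r : R) :
    contraction R h k (simplicialBoundary R k (.single S (single g r))) =
      cone R (sInf (divisors (g⁻¹ * h))) k (simplicialBoundary R k (.single S (single g r))) := by
  have hat (w : Cell k →₀ R) :
      contraction R h k (Finsupp.mapRange.linearMap (lsingle (R := R) g) w) =
        cone R (sInf (divisors (g⁻¹ * h))) k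
          (Finsupp.mapRange.linearMap (lsingle (R := R) g) w) := by
    induction w using Finsupp.induction_linear with
    | zero => simp only [map_zero]
    | add z w hz hw => rw [map_add, map_add, map_add, hz, hw]
    | single T r => rw [mapRange_single, lsingle_apply, contraction_single_of_nonempty hD]
  rw [← lsingle_apply (R := R) g r, ← mapRange_single, simplicialBoundary_mapRange, hat]

theorem simplicialBoundary_contraction_succ {h : ThompsonF} {N k : ℕ}
    {z : Cell (k + 1) →₀ R[ThompsonF]} (hz : z ∈ chainsBelow R h N (k + 1)) :
    simplicialBoundary R (k + 1) (contraction R h (k + 1) z) +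
      contraction R h k (simplicialBoundary R k z) = z := by
  rw [← sub_eq_zero]
  refine (Submodule.mem_bot R).1 <| map_mem_of_mem_chainsBelow (P := ⊥)
    (f := simplicialBoundary R (k + 1) ∘ₗ contraction R h (k + 1) +
      contraction R h k ∘ₗ simplicialBoundary R k - LinearMap.id) (fun S g r _ hS _ ↦ ?_) hz
  have hD : (divisors (g⁻¹ * h)).Nonempty := by
    cases S with | cons a T =>
    exact ⟨a, hS (Cell.mem_indices_cons.2 (.inl rfl))⟩
  simp only [Submodule.mem_bot, LinearMap.sub_apply, LinearMap.add_apply, LinearMap.comp_apply,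
    LinearMap.id_apply, sub_eq_zero]
  rw [contraction_single_of_nonempty hD, contraction_simplicialBoundary_single hD,
    simplicialBoundary_cone_succ fun i hi ↦ Nat.sInf_le (hS hi)]

theorem contraction_mem_chainsBelow {h : ThompsonF} {N k : ℕ} {z : Cell k →₀ R[ThompsonF]}
    (hz : z ∈ chainsBelow R h N k) : contraction R h k z ∈ chainsBelow R h N (k + 1) := by
  refine map_mem_of_mem_chainsBelow (fun S g r hg hS hN ↦ ?_) hz
  rcases (divisors (g⁻¹ * h)).eq_empty_or_nonempty with hD | hD
  · rw [contraction_single_of_eq_empty hD]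
    exact zero_mem _
  · rw [contraction_single_of_nonempty hD]
    refine cone_single_mem fun T hT ↦ single_mem_chainsBelow hg (fun i hi ↦ ?_) hN r
    rcases Finset.mem_insert.1 (hT hi) with rfl | hi
    · exact Nat.sInf_mem hD
    · exact hS hi

theorem chainsBelow_zero_succ (h : ThompsonF) (k : ℕ) : chainsBelow R h 0 (k + 1) = ⊥ := by
  rw [chainsBelow, Submodule.span_eq_bot]
  rintro _ ⟨S, g, r, rfl, -, hS, hN⟩
  cases S with | cons a T =>
  have := exponentSum_pos (hS (Cell.mem_indices_cons.2 (.inl rfl)))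
  rw [Nat.cast_zero] at hN
  omega

theorem exists_boundary_eq_of_mem_chainsBelow {h : ThompsonF} {N k : ℕ}
    {z : Cell (k + 1) →₀ R[ThompsonF]} (hz : z ∈ chainsBelow R h N (k + 1))
    (hcycle : boundary (mulGen R) k z = 0) : ∃ w, boundary (mulGen R) (k + 1) w = z := by
  induction N generalizing z with
  | zero =>
    rw [chainsBelow_zero_succ, Submodule.mem_bot] at hz
    exact ⟨0, by rw [hz, map_zero]⟩
  | succ N ih =>
    set w := contraction R h (k + 1) z
    have hw : z - boundary (mulGen R) (k + 1) w =
        (simplicialBoundary R (k + 1) w - boundary (mulGen R) (k + 1) w) +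
          contraction R h k (simplicialBoundary R k z - boundary (mulGen R) k z) := by
      nth_rw 1 [← simplicialBoundary_contraction_succ hz]
      rw [hcycle, sub_zero]
      abel
    have hmem : z - boundary (mulGen R) (k + 1) w ∈ chainsBelow R h N (k + 1) := by
      rw [hw]
      exact add_mem
        (simplicialBoundary_sub_boundary_mem_chainsBelow (contraction_mem_chainsBelow hz))
        (contraction_mem_chainsBelow (simplicialBoundary_sub_boundary_mem_chainsBelow hz))
    obtain ⟨v, hv⟩ := ih hmem <| by
      rw [map_sub, hcycle, boundary_boundary fun _ _ ↦ mulGen_mul_mulGen, sub_zero]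
    exact ⟨v + w, by rw [map_add, hv, sub_add_cancel]⟩

theorem sub_simplicialBoundary_contraction_zero_mem {h : ThompsonF} {N : ℕ}
    {z : Cell 0 →₀ R[ThompsonF]} (hz : z ∈ chainsBelow R h N 0) :
    z - simplicialBoundary R 0 (contraction R h 0 z) ∈ chainsBelow R h 0 0 := by
  refine map_mem_of_mem_chainsBelow
    (f := LinearMap.id - simplicialBoundary R 0 ∘ₗ contraction R h 0) (fun S g r hg hS _ ↦ ?_) hz
  simp only [LinearMap.sub_apply, LinearMap.id_apply, LinearMap.comp_apply]
  rcases (divisors (g⁻¹ * h)).eq_empty_or_nonempty with hD | hD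
  · rw [contraction_single_of_eq_empty hD, map_zero, sub_zero]
    refine single_mem_chainsBelow hg hS ?_ r
    simp [eq_one_of_divisors_eq_empty hg hD]
  · rw [contraction_single_of_nonempty hD, simplicialBoundary_cone_zero, sub_self]
    exact zero_mem _

theorem eq_zero_of_mem_chainsBelow_zero {h : ThompsonF} {z : Cell 0 →₀ R[ThompsonF]}
    (hz : z ∈ chainsBelow R h 0 0) (haug : augmentation z = 0) : z = 0 := by
  have hsingle : z = .single .nil (single h (augmentation z)) := by
    rw [← sub_eq_zero]
    refine (Submodule.mem_bot R).1 <| map_mem_of_mem_chainsBelow (P := ⊥)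
      (f := LinearMap.id - Finsupp.lsingle .nil ∘ₗ lsingle h ∘ₗ augmentation)
      (fun S g r hg _ hN ↦ ?_) hz
    have hD : divisors (g⁻¹ * h) = ∅ :=
      Set.eq_empty_of_forall_notMem fun i hi ↦ hN.not_gt (exponentSum_pos hi)
    obtain rfl := inv_mul_eq_one.1 (eq_one_of_divisors_eq_empty hg hD)
    cases S
    simp [augmentation_single]
  rw [hsingle, haug, single_zero, Finsupp.single_zero]

theorem augmentation_boundary (z : Cell 1 →₀ R[ThompsonF]) :
    augmentation (boundary (mulGen R) 0 z) = 0 := by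
  induction z using chain_induction with
  | zero => simp only [map_zero]
  | add z w hz hw => rw [map_add, map_add, hz, hw, add_zero]
  | single S g r =>
    cases S
    rw [boundary_zero_single, mulGen_single, Finsupp.single_sub, map_sub, augmentation_single,
      augmentation_single, sub_self]

theorem exists_boundary_eq_of_mem_chainsBelow_of_augmentation_eq_zero {h : ThompsonF} {N : ℕ}
    {z : Cell 0 →₀ R[ThompsonF]} (hz : z ∈ chainsBelow R h N 0) (haug : augmentation z = 0) :
    ∃ w, boundary (mulGen R) 0 w = z := by
  induction N generalizing z with
  | zero => exact ⟨0, by rw [eq_zero_of_mem_chainsBelow_zero hz haug, map_zero]⟩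
  | succ N ih =>
    set w := contraction R h 0 z
    have hmem : z - boundary (mulGen R) 0 w ∈ chainsBelow R h N 0 := by
      rw [← sub_add_sub_cancel _ (simplicialBoundary R 0 w)]
      exact add_mem (chainsBelow_mono N.zero_le (sub_simplicialBoundary_contraction_zero_mem hz))
        (simplicialBoundary_sub_boundary_mem_chainsBelow (contraction_mem_chainsBelow hz))
    obtain ⟨v, hv⟩ := ih hmem (by rw [map_sub, haug, augmentation_boundary, sub_zero])
    exact ⟨v + w, by rw [map_add, hv, sub_add_cancel]⟩

theorem exists_mem_chainsBelow {k : ℕ} (z : Cell k →₀ R[ThompsonF]) :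
    ∃ h N, z ∈ chainsBelow R h N k := by
  classical
  induction z using chain_induction with
  | zero => exact ⟨1, 0, zero_mem _⟩
  | add z w hz hw =>
    obtain ⟨h, N, hz⟩ := hz
    obtain ⟨h', N', hw⟩ := hw
    obtain ⟨m, hm, hm'⟩ := exists_mul_mem_positive (h'⁻¹ * h)
    refine ⟨h * m, (N + (exponentSum m).toAdd).toNat +
      (N' + (exponentSum (h'⁻¹ * h * m)).toAdd).toNat, add_mem ?_ ?_⟩
    · exact chainsBelow_le hm (by omega) hz
    · rw [show h * m = h' * (h'⁻¹ * h * m) by group]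
      exact chainsBelow_le hm' (by omega) hw
  | single S g r =>
    obtain ⟨h, hS⟩ := exists_forall_mul_mem_positive
      (insert g⁻¹ (S.indices.image fun i ↦ (gen i)⁻¹ * g⁻¹))
    refine ⟨h, (exponentSum (g⁻¹ * h)).toAdd.toNat, single_mem_chainsBelow
      (hS _ (Finset.mem_insert_self _ _)) (fun i hi ↦ ?_) (Int.self_le_toNat _) r⟩
    rw [mem_divisors, ← mul_assoc]
    exact hS _ (Finset.mem_insert_of_mem (Finset.mem_image_of_mem _ hi))

theorem exists_boundary_eq_of_boundary_eq_zero {k : ℕ} {z : Cell (k + 1) →₀ R[ThompsonF]}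
    (hz : boundary (mulGen R) k z = 0) : ∃ w, boundary (mulGen R) (k + 1) w = z := by
  obtain ⟨h, N, hmem⟩ := exists_mem_chainsBelow z
  exact exists_boundary_eq_of_mem_chainsBelow hmem hz

theorem exists_boundary_eq_of_augmentation_eq_zero {z : Cell 0 →₀ R[ThompsonF]}
    (hz : augmentation z = 0) :
    ∃ w, boundary (mulGen R) 0 w = z := by
  obtain ⟨h, N, hmem⟩ := exists_mem_chainsBelow z
  exact exists_boundary_eq_of_mem_chainsBelow_of_augmentation_eq_zero hmem hz

end Acyclic

/-! ### Cellular cochains -/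

section Cochains

variable (R A : Type*) [CommRing R] [AddCommGroup A] [Module R A]

/-- The cellular coboundary with coefficients in a trivial representation `A` of `F`. It vanishes in
degree `0` because both ends of an edge are translates of the only vertex. -/
def coboundary : (k : ℕ) → (Cell k → A) →ₗ[R] (Cell (k + 1) → A)
  | 0 => 0
  | k + 1 => LinearMap.pi fun
    | .cons a T => .proj (T.raise (a + 1)) - .proj (T.raise (a + 2)) -
        .proj T ∘ₗ coboundary k ∘ₗ .funLeft R A (.cons a)

/-- The degree-raising map which, up to sign, induces the isomorphism `Hᵏ ≅ Hᵏ⁺¹` for `0 < k`. -/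
def suspend (k : ℕ) : (Cell k → A) →ₗ[R] (Cell (k + 1) → A) :=
  LinearMap.pi fun
    | .cons 0 _ => 0
    | .cons (_ + 1) T => .proj T

/-- The degree-lowering left inverse of `suspend`, inverse to it up to homotopy. -/
def desuspend (k : ℕ) : (Cell (k + 1) → A) →ₗ[R] (Cell k → A) :=
  LinearMap.pi fun T ↦ .proj (.cons 1 T) - .proj (.cons 0 (T.raise 1))

/-- The homotopy between `suspend ∘ desuspend` and the identity. -/
def suspendHomotopy (k : ℕ) : (Cell (k + 2) → A) →ₗ[R] (Cell (k + 1) → A) :=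
  LinearMap.pi fun
    | .cons n T => -∑ a ∈ Finset.range (n - 1), .proj (.cons 0 (.cons a T))

/-- The two values which determine the class of a cocycle of degree `k + 1`: in degree `1` they are
the values on `x₀` and `x₁`, and higher degrees reduce to this by desuspension. -/
def cocycleInvariant : (k : ℕ) → (Cell (k + 1) → A) →ₗ[R] A × A
  | 0 => (LinearMap.proj (.cons 0 .nil)).prod (.proj (.cons 1 .nil))
  | k + 1 => cocycleInvariant k ∘ₗ desuspend R A (k + 1)

variable {R A}

theorem coboundary_succ_cons {k : ℕ} (f : Cell (k + 1) → A) (a : ℕ) (T : Cell (k + 1)) :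
    coboundary R A (k + 1) f (.cons a T) = f (T.raise (a + 1)) - f (T.raise (a + 2)) -
      coboundary R A k (f ∘ .cons a) T := rfl

theorem suspend_cons_zero {k : ℕ} (f : Cell k → A) (T : Cell k) :
    suspend R A k f (.cons 0 T) = 0 := rfl

theorem suspend_cons_succ {k : ℕ} (f : Cell k → A) (n : ℕ) (T : Cell k) :
    suspend R A k f (.cons (n + 1) T) = f T := rfl

theorem desuspend_apply {k : ℕ} (f : Cell (k + 1) → A) (T : Cell k) :
    desuspend R A k f T = f (.cons 1 T) - f (.cons 0 (T.raise 1)) := rfl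

theorem suspendHomotopy_cons {k : ℕ} (f : Cell (k + 2) → A) (n : ℕ) (T : Cell k) :
    suspendHomotopy R A k f (.cons n T) =
      -∑ a ∈ Finset.range (n - 1), f (.cons 0 (.cons a T)) := by
  simp [suspendHomotopy, LinearMap.sum_apply]

theorem suspendHomotopy_comp_cons_of_le_one {k n : ℕ} (hn : n ≤ 1) (f : Cell (k + 2) → A) :
    suspendHomotopy R A k f ∘ .cons n = 0 := by
  funext T
  simp [suspendHomotopy_cons, Nat.sub_eq_zero_of_le hn]

theorem suspendHomotopy_cons_sub {k : ℕ} (f : Cell (k + 2) → A) (n : ℕ) (T : Cell k) :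
    suspendHomotopy R A k f (.cons (n + 1) T) - suspendHomotopy R A k f (.cons (n + 2) T) =
      f (.cons 0 (.cons n T)) := by
  simp only [suspendHomotopy_cons, Nat.add_sub_cancel, Finset.sum_range_succ,
    show n + 2 - 1 = n + 1 from rfl]
  abel

theorem coboundary_raise {k : ℕ} (f : Cell k → A) (j : ℕ) (T : Cell (k + 1)) :
    coboundary R A k f (T.raise j) = coboundary R A k (f ∘ .raise j) T := by
  cases k with
  | zero => rfl
  | succ k =>
    cases T with | cons a T =>
    simp only [Cell.raise_cons, coboundary_succ_cons, Function.comp_apply, Cell.raise_raise,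
      Nat.add_right_comm a j]
    rfl

theorem desuspend_suspend {k : ℕ} (f : Cell k → A) : desuspend R A k (suspend R A k f) = f := by
  funext T
  rw [desuspend_apply, suspend_cons_zero, suspend_cons_succ, sub_zero]

theorem coboundary_suspend {k : ℕ} (f : Cell k → A) :
    coboundary R A (k + 1) (suspend R A k f) = -suspend R A (k + 1) (coboundary R A k f) := by
  funext S
  rcases S with _ | ⟨_ | n, _ | ⟨a, T⟩⟩
  · have h : suspend R A k f ∘ Cell.cons 0 = 0 := rfl
    simp [coboundary_succ_cons, Cell.raise_cons, suspend_cons_succ, suspend_cons_zero, h]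
  · have h : suspend R A k f ∘ Cell.cons (n + 1) = f := rfl
    simp [coboundary_succ_cons, Cell.raise_cons, suspend_cons_succ, h, ← Nat.add_assoc]

theorem desuspend_coboundary {k : ℕ} (f : Cell (k + 1) → A) :
    desuspend R A (k + 1) (coboundary R A (k + 1) f) =
      -coboundary R A k (desuspend R A k f) := by
  funext T
  have h : desuspend R A k f = f ∘ Cell.cons 1 - (f ∘ Cell.cons 0) ∘ Cell.raise 1 := rfl
  simp only [desuspend_apply, coboundary_succ_cons, Cell.raise_raise, coboundary_raise, h,
    map_sub, Pi.neg_apply, Pi.sub_apply]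
  abel

theorem coboundary_suspendHomotopy_cons {k : ℕ} (f : Cell (k + 2) → A) (n : ℕ)
    (T : Cell (k + 1)) :
    coboundary R A (k + 1) (suspendHomotopy R A k f) (.cons n T) =
      f (.cons 0 (T.raise n)) - coboundary R A k (suspendHomotopy R A k f ∘ .cons n) T := by
  cases T with | cons c T =>
  rw [coboundary_succ_cons, Cell.raise_cons, Cell.raise_cons, Cell.raise_cons, ← Nat.add_assoc,
    ← Nat.add_assoc, suspendHomotopy_cons_sub]

theorem sub_suspend_desuspend {k : ℕ} (f : Cell (k + 2) → A) :
    f - suspend R A (k + 1) (desuspend R A (k + 1) f) =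
      coboundary R A (k + 1) (suspendHomotopy R A k f) +
        suspendHomotopy R A (k + 1) (coboundary R A (k + 2) f) := by
  funext S
  cases S with | cons n T =>
  rw [Pi.add_apply, Pi.sub_apply, coboundary_suspendHomotopy_cons]
  rcases n with _ | n
  · rw [suspendHomotopy_comp_cons_of_le_one zero_le_one]
    simp [suspendHomotopy_cons, suspend_cons_zero]
  induction n with
  | zero =>
    rw [suspendHomotopy_comp_cons_of_le_one le_rfl]
    simp [suspendHomotopy_cons, suspend_cons_succ, desuspend_apply]
  | succ n ih =>
    have hcomp : f ∘ Cell.cons 0 ∘ Cell.cons n = suspendHomotopy R A k f ∘ Cell.cons (n + 1) -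
        suspendHomotopy R A k f ∘ Cell.cons (n + 2) :=
      funext fun T ↦ (suspendHomotopy_cons_sub f n T).symm
    have hstep := suspendHomotopy_cons_sub (R := R) (coboundary R A (k + 2) f) n T
    simp only [coboundary_succ_cons, Function.comp_assoc, Function.comp_apply, Cell.raise_cons,
      zero_add, hcomp, map_sub, Pi.sub_apply] at hstep
    rw [suspend_cons_succ] at ih ⊢
    linear_combination (norm := module) ih + hstep

theorem exists_cocycleInvariant_eq (k : ℕ) (v : A × A) :
    ∃ f, coboundary R A (k + 1) f = 0 ∧ cocycleInvariant R A k f = v := by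
  induction k with
  | zero =>
    refine ⟨fun | .cons 0 _ => v.1 | .cons (_ + 1) _ => v.2, ?_, rfl⟩
    funext S
    rcases S with _ | ⟨a, _ | ⟨b, T⟩⟩
    exact (sub_zero _).trans (sub_self v.2)
  | succ k ih =>
    obtain ⟨f, hf, hv⟩ := ih
    refine ⟨suspend R A (k + 1) f, ?_, ?_⟩
    · rw [coboundary_suspend, hf, map_zero, neg_zero]
    · rw [cocycleInvariant, LinearMap.comp_apply, desuspend_suspend, hv]

theorem cocycleInvariant_coboundary {k : ℕ} (f : Cell k → A) :
    cocycleInvariant R A k (coboundary R A k f) = 0 := by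
  induction k with
  | zero => rfl
  | succ k ih =>
    rw [cocycleInvariant, LinearMap.comp_apply, desuspend_coboundary, map_neg, ih, neg_zero]

theorem eq_zero_of_coboundary_eq_zero {f : Cell 1 → A} (hf : coboundary R A 1 f = 0)
    (h₀ : f (.cons 0 .nil) = 0) (h₁ : f (.cons 1 .nil) = 0) : f = 0 := by
  have hsucc (a : ℕ) : f (.cons (a + 1) .nil) = 0 := by
    induction a with
    | zero => exact h₁
    | succ a ih =>
      have h := congrFun hf (.cons 0 (.cons a .nil))
      simpa [coboundary, Cell.raise_cons, ih] using h
  funext S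
  rcases S with _ | ⟨_ | a, _ | _⟩
  exacts [h₀, hsucc a]

theorem exists_coboundary_eq_of_cocycleInvariant_eq_zero {k : ℕ} {f : Cell (k + 1) → A}
    (hf : coboundary R A (k + 1) f = 0) (hv : cocycleInvariant R A k f = 0) :
    ∃ g, coboundary R A k g = f := by
  induction k with
  | zero =>
    exact ⟨0, (eq_zero_of_coboundary_eq_zero hf (congrArg Prod.fst hv)
      (congrArg Prod.snd hv)).symm⟩
  | succ k ih =>
    obtain ⟨g, hg⟩ := ih (f := desuspend R A (k + 1) f)
      (by rw [← neg_eq_zero, ← desuspend_coboundary, hf, map_zero]) hv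
    refine ⟨suspendHomotopy R A k f - suspend R A k g, ?_⟩
    have h := sub_suspend_desuspend (R := R) f
    rw [hf, map_zero, add_zero, sub_eq_iff_eq_add] at h
    rw [map_sub, coboundary_suspend, hg, sub_neg_eq_add, ← h]

end Cochains

/-! ### The resolution and the cohomology of `F` -/

theorem map_boundary_single {R M A : Type*} [CommRing R] [AddCommGroup M] [Module R M]
    [AddCommGroup A] [Module R A] {φ : ℕ → Module.End R M} {k : ℕ} {f : (Cell k →₀ M) →ₗ[R] A}
    (hf : ∀ S n m, f (.single S (φ n m)) = f (.single S m)) (S : Cell (k + 1)) (m : M) :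
    f (boundary φ k (.single S m)) = coboundary R A k (fun T ↦ f (.single T m)) S := by
  induction k generalizing φ with
  | zero =>
    cases S
    rw [boundary_zero_single, Finsupp.single_sub, map_sub, hf, sub_self]
    rfl
  | succ k ih =>
    cases S with | cons a T =>
    have hcons : f ((boundary (fun n ↦ φ (n + (a + 1))) k (.single T m)).mapDomain (.cons a)) =
        coboundary R A k (fun T ↦ f (.single (.cons a T) m)) T := by
      simpa using ih (φ := fun n ↦ φ (n + (a + 1))) (f := f ∘ₗ Finsupp.lmapDomain M R (.cons a))
        (fun S n m ↦ by simp [hf]) T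
    rw [boundary_succ_single, map_sub, map_sub, hf, hcons]
    rfl

open CategoryTheory MonoidAlgebra

section Resolution

theorem free_apply_eq_mapRange {R : Type*} [CommRing R] (g : ThompsonF) {k : ℕ}
    (z : Cell k →₀ R[ThompsonF]) :
    Representation.free R ThompsonF (Cell k) g z =
      Finsupp.mapRange.linearMap (Representation.leftRegular R ThompsonF g) z := by
  induction z using chain_induction with
  | zero => simp only [map_zero]
  | add z w hz hw => rw [map_add, map_add, hz, hw]
  | single S h r => rw [Representation.finsupp_single, mapRange_single]

theorem leftRegular_comp_mulGen {R : Type*} [CommRing R] (g : ThompsonF) (n : ℕ) :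
    Representation.leftRegular R ThompsonF g ∘ₗ mulGen R n =
      mulGen R n ∘ₗ Representation.leftRegular R ThompsonF g := by
  ext
  simp [mulGen_single, mul_assoc]

variable (R : Type) [CommRing R]

/-- The equivariant cubical boundary. -/
noncomputable def boundaryHom (k : ℕ) :
    Rep.free R ThompsonF (Cell (k + 1)) ⟶ Rep.free R ThompsonF (Cell k) :=
  Rep.ofHom ⟨boundary (mulGen R) k, fun g ↦ LinearMap.ext fun z ↦ by
    simp only [LinearMap.comp_apply, free_apply_eq_mapRange]
    exact boundary_mapRange (leftRegular_comp_mulGen g) z⟩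

/-- The equivariant augmentation. -/
noncomputable def augmentationHom :
    Rep.free R ThompsonF (Cell 0) ⟶ Rep.trivial R ThompsonF R :=
  Rep.ofHom ⟨augmentation, fun g ↦ by ext; simp [augmentation_single]⟩

/-- The chain complex of the cubical complex of Brown and Geoghegan, on which `F` acts freely. -/
noncomputable def cubicalComplex : ChainComplex (Rep.{0} R ThompsonF) ℕ :=
  .of (fun k ↦ Rep.free R ThompsonF (Cell k)) (boundaryHom R) fun _ ↦
    Rep.free_ext _ _ _ _ _ fun _ ↦ boundary_boundary (fun _ _ ↦ mulGen_mul_mulGen) _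

theorem cubicalComplex_d (k : ℕ) : (cubicalComplex R).d (k + 1) k = boundaryHom R k :=
  ChainComplex.of_d (fun k ↦ Rep.free R ThompsonF (Cell k)) (boundaryHom R) k

/-- The augmentation of the cubical complex, as a chain map. -/
noncomputable def cubicalComplexπ :
    cubicalComplex R ⟶ (ChainComplex.single₀ _).obj (Rep.trivial R ThompsonF R) :=
  ((cubicalComplex R).toSingle₀Equiv _).symm ⟨augmentationHom R, by
    rw [cubicalComplex_d]
    exact Rep.free_ext _ _ _ _ _ fun _ ↦ augmentation_boundary _⟩

theorem cubicalComplexπ_f_zero : (cubicalComplexπ R).f 0 = augmentationHom R :=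
  ChainComplex.toSingle₀Equiv_symm_apply_f_zero _ _

theorem rep_shortComplex_exact {R G : Type*} [CommRing R] [Group G] {S : ShortComplex (Rep R G)}
    (h : ∀ z : S.X₂, S.g.hom z = 0 → ∃ w : S.X₁, S.f.hom w = z) : S.Exact := by
  apply (forget₂ _ (ModuleCat R)).reflects_exact_of_faithful
  rwa [ShortComplex.moduleCat_exact_iff]

theorem quasiIso_cubicalComplexπ : QuasiIso (cubicalComplexπ R) where
  quasiIsoAt k := by
    cases k with
    | zero =>
      rw [ChainComplex.quasiIsoAt₀_iff, ShortComplex.quasiIso_iff_of_zeros' _ rfl rfl rfl]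
      constructor
      · refine rep_shortComplex_exact fun z hz ↦ ?_
        change ((cubicalComplexπ R).f 0).hom z = 0 at hz
        change ∃ w, ((cubicalComplex R).d 1 0).hom w = z
        rw [cubicalComplexπ_f_zero] at hz
        rw [cubicalComplex_d]
        exact exists_boundary_eq_of_augmentation_eq_zero hz
      · change Epi ((cubicalComplexπ R).f 0)
        rw [cubicalComplexπ_f_zero]
        exact (Rep.epi_iff_surjective (augmentationHom R)).2 fun r ↦
          ⟨.single .nil (single 1 r), augmentation_single _ _ _⟩
    | succ k =>
      rw [quasiIsoAt_iff_exactAt' (hL := ChainComplex.exactAt_succ_single_obj ..),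
        HomologicalComplex.exactAt_iff' _ (k + 2) (k + 1) k (by simp) (by simp)]
      refine rep_shortComplex_exact fun z hz ↦ ?_
      change ((cubicalComplex R).d (k + 1) k).hom z = 0 at hz
      change ∃ w, ((cubicalComplex R).d (k + 2) (k + 1)).hom w = z
      rw [cubicalComplex_d] at hz ⊢
      exact exists_boundary_eq_of_boundary_eq_zero hz

/-- The cubical complex as a free resolution of the trivial representation. -/
noncomputable def cubicalResolution : ProjectiveResolution (Rep.trivial R ThompsonF R) where
  complex := cubicalComplex R
  projective k := inferInstanceAs (Projective (Rep.free R ThompsonF (Cell k)))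
  π := cubicalComplexπ R
  quasiIso := quasiIso_cubicalComplexπ R

end Resolution

section Cohomology

variable {R : Type} [CommRing R]

theorem nonempty_homology_linearEquiv {S : ShortComplex (ModuleCat R)} {M₁ M₂ M₃ W : Type*}
    [AddCommGroup M₁] [Module R M₁] [AddCommGroup M₂] [Module R M₂] [AddCommGroup M₃] [Module R M₃]
    [AddCommGroup W] [Module R W] {d₁ : M₁ →ₗ[R] M₂} {d₂ : M₂ →ₗ[R] M₃} {φ : M₂ →ₗ[R] W}
    (e₁ : S.X₁ ≃ₗ[R] M₁) (e₂ : S.X₂ ≃ₗ[R] M₂) (e₃ : S.X₃ ≃ₗ[R] M₃)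
    (hf : ∀ x, e₂ (S.f x) = d₁ (e₁ x)) (hg : ∀ x, e₃ (S.g x) = d₂ (e₂ x))
    (hsurj : ∀ w, ∃ z, d₂ z = 0 ∧ φ z = w) (hφ : ∀ y, φ (d₁ y) = 0)
    (hker : ∀ z, d₂ z = 0 → φ z = 0 → ∃ y, d₁ y = z) :
    Nonempty (S.homology ≃ₗ[R] W) := by
  have hcycle (x : S.X₂) : S.g x = 0 ↔ d₂ (e₂ x) = 0 := by rw [← hg, map_eq_zero_iff _ e₃.injective]
  let ψ : LinearMap.ker S.g.hom →ₗ[R] W := (φ ∘ₗ e₂.toLinearMap).domRestrict _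
  have hψ : Function.Surjective ψ := fun w ↦ by
    obtain ⟨z, hz, rfl⟩ := hsurj w
    exact ⟨⟨e₂.symm z, (hcycle _).2 (by rwa [e₂.apply_symm_apply])⟩,
      congrArg φ (e₂.apply_symm_apply z)⟩
  have hrange : LinearMap.range S.moduleCatToCycles = LinearMap.ker ψ := by
    ext ⟨z, hz⟩
    constructor
    · rintro ⟨y, hy⟩
      obtain rfl : S.f y = z := congrArg Subtype.val hy
      exact (congrArg φ (hf y)).trans (hφ _)
    · intro hψz
      obtain ⟨y, hy⟩ := hker _ ((hcycle z).1 hz) hψz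
      refine ⟨e₁.symm y, Subtype.ext (e₂.injective ?_)⟩
      exact (hf _).trans ((congrArg d₁ (e₁.apply_symm_apply y)).trans hy)
  exact ⟨S.moduleCatHomologyIso.toLinearEquiv ≪≫ₗ
    Submodule.quotEquivOfEq _ _ hrange ≪≫ₗ ψ.quotKerEquivOfSurjective hψ⟩

variable (R) (A : Type) [AddCommGroup A] [Module R A]

/-- Equivariant cochains on the cubical complex with values in a trivial representation are
functions on cells. -/
noncomputable def cochainEquiv (k : ℕ) :
    ((cubicalComplex R).linearYonedaObj R (Rep.trivial R ThompsonF A)).X k ≃ₗ[R] (Cell k → A) :=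
  Rep.freeLiftLEquiv R ThompsonF (Cell k) (Rep.trivial R ThompsonF A)

variable {R A}

theorem trivial_map_mulGen {k : ℕ}
    (f : Rep.free R ThompsonF (Cell k) ⟶ Rep.trivial R ThompsonF A) (S : Cell k) (n : ℕ)
    (m : R[ThompsonF]) : f.hom (.single S (mulGen R n m)) = f.hom (.single S m) := by
  have hinv (g : ThompsonF) (r : R) :
      f.hom (.single S (single g r)) = f.hom (.single S (single 1 r)) := by
    rw [← mul_one g, ← Representation.free_single_single]
    exact Rep.hom_comm_apply f g (.single S (single 1 r))
  induction m using MonoidAlgebra.induction_linear with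
  | zero => simp only [map_zero]
  | add a b ha hb => simp only [map_add, Finsupp.single_add, ha, hb]
  | single g r => rw [mulGen_single, hinv, hinv g]

theorem cochainEquiv_d {k : ℕ}
    (f : ((cubicalComplex R).linearYonedaObj R (Rep.trivial R ThompsonF A)).X k) :
    cochainEquiv R A (k + 1)
        (((cubicalComplex R).linearYonedaObj R (Rep.trivial R ThompsonF A)).d k (k + 1) f) =
      coboundary R A k (cochainEquiv R A k f) := by
  change Rep.freeLiftLEquiv R ThompsonF (Cell (k + 1)) (Rep.trivial R ThompsonF A)
    ((cubicalComplex R).d (k + 1) k ≫ f) = _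
  rw [cubicalComplex_d]
  funext S
  exact map_boundary_single (f := f.hom.toLinearMap) (trivial_map_mulGen f) S _

end Cohomology

end ThompsonF

open CategoryTheory ThompsonF in
theorem thompsonF_cohomology_general {R A : Type} [CommRing R] [AddCommGroup A] [Module R A]
    {n : ℕ} (hn : 1 ≤ n) :
    Nonempty (groupCohomology (Rep.trivial R ThompsonF A) n ≃ₗ[R] A × A) := by
  obtain ⟨k, rfl⟩ := Nat.exists_eq_add_of_le' hn
  let K := (cubicalComplex R).linearYonedaObj R (Rep.trivial R ThompsonF A)
  obtain ⟨e⟩ := nonempty_homology_linearEquiv (S := K.sc' k (k + 1) (k + 2))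
    (cochainEquiv R A k) (cochainEquiv R A (k + 1)) (cochainEquiv R A (k + 2))
    cochainEquiv_d cochainEquiv_d (exists_cocycleInvariant_eq k) cocycleInvariant_coboundary
    fun _ ↦ exists_coboundary_eq_of_cocycleInvariant_eq_zero
  exact ⟨(groupCohomologyIso _ _ (cubicalResolution R) ≪≫
    K.homologyIsoSc' k (k + 1) (k + 2) (by simp) (by simp)).toLinearEquiv ≪≫ₗ e⟩

/-- For every `n ≥ 1`, the integral group cohomology `Hⁿ(F; ℤ)` of Thompson's group `F`
(with trivial `ℤ` coefficients) is free abelian of rank 2, i.e. isomorphic to `ℤ × ℤ`. -/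
theorem thompsonF_cohomology (n : ℕ) (hn : 1 ≤ n) :
    Nonempty ((groupCohomology (Rep.trivial ℤ ThompsonF ℤ) n) ≃ₗ[ℤ] (ℤ × ℤ)) :=
  thompsonF_cohomology_general hn
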